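/- Second Fundamental Theorem for the GFD of arbitrary order (Caputo case): Let n ∈ ℕ and let (κ, k) be a pair of kernels from L_n. Then for every f ∈ Cⁿ_{−1}(0,∞) and every t > 0, (I_{(κ)} ∗D_{(k)} f)(t) = f(t) − ∑_{j=0}^{n−1} f^{(j)}(0) h_{j+1}(t), where f^{(j)}(0) denotes the limit of f^{(j)}(t) as t → 0+ and h_{j+1}(t) = t^{j}/j!. -/

import Mathlib

open Real MeasureTheory Set Filter Topology

/-- The Laplace convolution `(f * g)(t) = ∫₀ᵗ f(t-τ) g(τ) dτ`. -/
noncomputable def lconv (f g : ℝ → ℝ) : ℝ → ℝ :=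
  fun t => ∫ τ in (0:ℝ)..t, f (t - τ) * g τ

/-- The space `C_{-1}(0,∞)`: functions of the form `t^p f₁(t)` with `p > -1`
and `f₁` continuous on `[0,∞)`. -/
def Cm1 (f : ℝ → ℝ) : Prop :=
  ∃ p : ℝ, -1 < p ∧ ∃ f₁ : ℝ → ℝ, ContinuousOn f₁ (Set.Ici 0) ∧
    ∀ t : ℝ, 0 < t → f t = t ^ p * f₁ t

/-- The subspace `C_{-1,0}(0,∞)`: functions of the form `t^p f₁(t)` with `-1 < p < 0`
and `f₁` continuous on `[0,∞)`. -/
def Cm10 (f : ℝ → ℝ) : Prop :=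
  ∃ p : ℝ, -1 < p ∧ p < 0 ∧ ∃ f₁ : ℝ → ℝ, ContinuousOn f₁ (Set.Ici 0) ∧
    ∀ t : ℝ, 0 < t → f t = t ^ p * f₁ t


structure CA (f : ℝ → ℝ) : Prop where
  cont : ContinuousOn f (Ioi 0)
  int : ∀ T : ℝ, 0 < T → IntervalIntegrable f volume 0 T

theorem Cm1.ca {f : ℝ → ℝ} (h : Cm1 f) : CA f := by
  obtain ⟨p, hp, f₁, hf, he⟩ := h
  constructor
  · have : ContinuousOn (fun t : ℝ => t ^ p * f₁ t) (Ioi 0) := by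
      refine ContinuousOn.mul ?_ (hf.mono Ioi_subset_Ici_self)
      exact continuousOn_id.rpow_const (fun x hx => Or.inl (ne_of_gt hx))
    exact this.congr (fun t ht => he t ht)
  · intro T hT
    have h1 : IntervalIntegrable (fun t : ℝ => t ^ p * f₁ t) volume 0 T := by
      refine (intervalIntegral.intervalIntegrable_rpow' hp).mul_continuousOn ?_
      rw [uIcc_of_le hT.le]
      exact hf.mono Icc_subset_Ici_self
    refine h1.congr ?_
    intro t ht
    rw [uIoc_of_le hT.le] at ht
    exact (he t ht.1).symm

theorem Cm10.cm1 {f : ℝ → ℝ} (h : Cm10 f) : Cm1 f := by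
  obtain ⟨p, hp, _, r⟩ := h
  exact ⟨p, hp, r⟩

theorem CA.abs {f : ℝ → ℝ} (h : CA f) : CA (fun t => |f t|) :=
  ⟨h.cont.abs, fun T hT => (h.int T hT).abs⟩

theorem CA.one : CA (fun _ => (1:ℝ)) :=
  ⟨continuousOn_const, fun T hT => intervalIntegrable_const⟩

theorem CA.congr {f g : ℝ → ℝ} (h : CA f) (e : ∀ t, 0 < t → g t = f t) : CA g := by
  refine ⟨h.cont.congr e, fun T hT => (h.int T hT).congr ?_⟩
  intro t ht
  rw [uIoc_of_le hT.le] at ht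
  exact (e t ht.1).symm

theorem CA.exist {f g : ℝ → ℝ} (hf : CA f) (hg : CA g) {t : ℝ} (ht : 0 < t) :
    IntervalIntegrable (fun τ => f (t - τ) * g τ) volume 0 t := by
  have h2 : 0 < t / 2 := by linarith
  refine IntervalIntegrable.trans (b := t / 2) ?_ ?_
  · refine (hg.int _ h2).continuousOn_mul ?_
    rw [uIcc_of_le h2.le]
    refine hf.cont.comp (by fun_prop) ?_
    intro x hx
    simp only [mem_Ioi]
    linarith [hx.2]
  · have := (hf.int _ h2).symm.comp_sub_left t
    rw [sub_zero, show t - t / 2 = t / 2 by ring] at this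
    refine this.mul_continuousOn ?_
    rw [uIcc_of_le (by linarith)]
    refine hg.cont.mono ?_
    intro x hx
    simp only [mem_Ioi]
    linarith [hx.1]

theorem lconv_comm (f g : ℝ → ℝ) (t : ℝ) : lconv f g t = lconv g f t := by
  unfold lconv
  have := intervalIntegral.integral_comp_sub_left (a := 0) (b := t) (fun τ => g (t - τ) * f τ) t
  rw [sub_zero, sub_self] at this
  rw [← this]
  congr 1
  ext x
  rw [sub_sub_cancel, mul_comm]

theorem lconv_congr {f g f' g' : ℝ → ℝ} {t : ℝ} (ht : 0 < t)
    (hf : ∀ s, 0 < s → s < t → f s = f' s) (hg : ∀ s, 0 < s → s < t → g s = g' s) :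
    lconv f g t = lconv f' g' t := by
  unfold lconv
  rw [intervalIntegral.integral_of_le ht.le, intervalIntegral.integral_of_le ht.le,
    integral_Ioc_eq_integral_Ioo, integral_Ioc_eq_integral_Ioo]
  refine setIntegral_congr_fun measurableSet_Ioo ?_
  intro x hx
  simp only
  rw [hf _ (by linarith [hx.2]) (by linarith [hx.1]), hg _ hx.1 hx.2]

/-- causal extension -/
noncomputable def PP (f : ℝ → ℝ) : ℝ → ℝ := indicator (Ioi 0) f

theorem PP_pos (f : ℝ → ℝ) {t : ℝ} (h : 0 < t) : PP f t = f t := indicator_of_mem (by exact h) _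
theorem PP_neg (f : ℝ → ℝ) {t : ℝ} (h : t ≤ 0) : PP f t = 0 :=
  indicator_of_notMem (by simpa using h) _

theorem CA.meas {f : ℝ → ℝ} (hf : CA f) : Measurable (PP f) := by
  unfold PP
  have := hf.cont.measurable_piecewise (g := (0 : ℝ → ℝ)) (by exact continuousOn_const) measurableSet_Ioi
  rwa [piecewise_eq_indicator] at this

theorem CA.aesm {f : ℝ → ℝ} (hf : CA f) : AEStronglyMeasurable (PP f) volume :=
  hf.meas.aestronglyMeasurable

theorem PP_contAt {f : ℝ → ℝ} (hf : CA f) {t : ℝ} (h : 0 < t) : ContinuousAt (PP f) t := by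
  have : ContinuousAt f t := hf.cont.continuousAt (Ioi_mem_nhds h)
  refine this.congr ?_
  filter_upwards [Ioi_mem_nhds h] with x hx
  exact (PP_pos f hx).symm

theorem CA.PPint {f : ℝ → ℝ} (hf : CA f) {a b : ℝ} (ha : a ≤ 0) (hb : 0 < b) :
    IntervalIntegrable (PP f) volume a b := by
  refine IntervalIntegrable.trans (b := 0) ?_ ?_
  · have : IntervalIntegrable (fun _ => (0:ℝ)) volume a 0 := intervalIntegrable_const
    refine this.congr ?_
    intro t ht
    rw [uIoc_of_le ha] at ht
    exact (PP_neg f ht.2).symm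
  · refine (hf.int b hb).congr ?_
    intro t ht
    rw [uIoc_of_le hb.le] at ht
    exact (PP_pos f ht.1).symm

theorem half_cont {f g : ℝ → ℝ} (hf : CA f) (hg : CA g) {t₀ b₀ : ℝ} (hb : 0 < b₀) (hbt : b₀ < t₀) :
    ContinuousAt (fun p : ℝ × ℝ => ∫ τ in (0:ℝ)..p.2, PP f (p.1 - τ) * PP g τ) (t₀, b₀) := by
  obtain ⟨b, hb1, hb2⟩ := exists_between hbt
  set ε := (t₀ - b) / 2 with hε
  have hε0 : 0 < ε := by rw [hε]; linarith
  have hsub : Icc ε (t₀ + ε) ⊆ Ioi (0:ℝ) := fun x hx => lt_of_lt_of_le hε0 hx.1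
  obtain ⟨M, hM⟩ := isCompact_Icc.exists_bound_of_continuousOn (hf.cont.mono hsub)
  refine intervalIntegral.continuousAt_parametric_primitive_of_dominated
    (F := fun x τ => PP f (x - τ) * PP g τ) (fun τ => M * |PP g τ|) (-1) b ?_ ?_ ?_ ?_
    ⟨by norm_num, by linarith⟩ ⟨by linarith, hb1⟩ (by simp)
  · intro x
    have h1 := hf.meas
    have h2 := hg.meas
    have : Measurable (fun τ => PP f (x - τ) * PP g τ) := by fun_prop
    exact this.aestronglyMeasurable
  · filter_upwards [Icc_mem_nhds (show t₀ - ε < t₀ by linarith) (show t₀ < t₀ + ε by linarith)]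
      with x hx
    refine (ae_restrict_iff' measurableSet_uIoc).2 (Eventually.of_forall ?_)
    intro τ hτ
    rw [uIoc_of_le (by linarith)] at hτ
    rcases le_or_gt τ 0 with h | h
    · simp [PP_neg g h]
    · rw [norm_mul, Real.norm_eq_abs (PP g τ)]
      refine mul_le_mul_of_nonneg_right ?_ (abs_nonneg _)
      have h3 : x - τ ∈ Icc ε (t₀ + ε) := ⟨by linarith [hx.1, hτ.2], by linarith [hx.2]⟩
      rw [PP_pos f (hsub h3)]
      exact hM _ h3
  · exact ((hg.PPint (by norm_num) (by linarith)).abs).const_mul M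
  · refine (ae_restrict_iff' measurableSet_uIoc).2 (Eventually.of_forall ?_)
    intro τ hτ
    rw [uIoc_of_le (by linarith)] at hτ
    have h1 : ContinuousAt (PP f) (t₀ - τ) := PP_contAt hf (by linarith [hτ.2])
    have h2 : ContinuousAt (fun x => PP f (x - τ)) t₀ :=
      ContinuousAt.comp (f := fun x => x - τ) h1 (by fun_prop)
    exact h2.mul continuousAt_const

theorem lconv_PP (f g : ℝ → ℝ) {t : ℝ} (ht : 0 < t) : lconv (PP f) (PP g) t = lconv f g t :=
  lconv_congr ht (fun s hs _ => PP_pos f hs) (fun s hs _ => PP_pos g hs)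

theorem CA.PP {f : ℝ → ℝ} (hf : CA f) : CA (PP f) := hf.congr (fun t ht => PP_pos f ht)

theorem lconv_split {f g : ℝ → ℝ} (hf : CA f) (hg : CA g) {t : ℝ} (ht : 0 < t) :
    lconv f g t = (∫ τ in (0:ℝ)..(t/2), PP f (t - τ) * PP g τ)
      + ∫ τ in (0:ℝ)..(t/2), PP g (t - τ) * PP f τ := by
  rw [← lconv_PP f g ht]
  unfold lconv
  have hi := CA.exist hf.PP hg.PP ht
  have h2 : t / 2 ∈ uIcc 0 t := by
    rw [uIcc_of_le ht.le]; constructor <;> linarith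
  rw [← intervalIntegral.integral_add_adjacent_intervals (b := t / 2)
    (hi.mono_set (uIcc_subset_uIcc left_mem_uIcc h2))
    (hi.mono_set (uIcc_subset_uIcc h2 right_mem_uIcc))]
  congr 1
  have := intervalIntegral.integral_comp_sub_left (a := t / 2) (b := t)
    (fun τ => _root_.PP g (t - τ) * _root_.PP f τ) t
  rw [sub_self, show t - t / 2 = t / 2 by ring] at this
  rw [← this]
  congr 1
  ext x
  rw [sub_sub_cancel, mul_comm]

theorem CA.conv {f g : ℝ → ℝ} (hf : CA f) (hg : CA g) : CA (lconv f g) := by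
  constructor
  · intro t ht
    have ht : 0 < t := ht
    refine ContinuousAt.continuousWithinAt ?_
    have hφ : ContinuousAt (fun s : ℝ => (s, s / 2)) t := by fun_prop
    have h1 := ContinuousAt.comp (f := fun s : ℝ => (s, s / 2)) (x := t)
      (half_cont hf hg (t₀ := t) (b₀ := t / 2) (by linarith) (by linarith)) hφ
    have h2 := ContinuousAt.comp (f := fun s : ℝ => (s, s / 2)) (x := t)
      (half_cont hg hf (t₀ := t) (b₀ := t / 2) (by linarith) (by linarith)) hφ
    refine (h1.add h2).congr ?_
    filter_upwards [Ioi_mem_nhds ht] with s hs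
    exact (lconv_split hf hg hs).symm
  · intro T hT
    have aux : ∀ {f : ℝ → ℝ}, CA f → IntegrableOn (indicator (Ioc 0 T) f) (Ioi 0) := by
      intro f hf
      have := (intervalIntegrable_iff_integrableOn_Ioc_of_le hT.le).1 (hf.int T hT)
      exact ((integrable_indicator_iff measurableSet_Ioc).2 this).integrableOn
    have h := integrable_posConvolution (aux hg) (aux hf) (ContinuousLinearMap.mul ℝ ℝ)
    refine (h.intervalIntegrable (a := 0) (b := T)).congr ?_
    intro t ht
    rw [uIoc_of_le hT.le] at ht
    have h0 : 0 < t := ht.1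
    simp only [posConvolution, indicator_of_mem (show t ∈ Ioi (0:ℝ) from h0)]
    have : lconv f g t = lconv (indicator (Ioc 0 T) f) (indicator (Ioc 0 T) g) t := by
      refine lconv_congr h0 ?_ ?_ <;> intro s hs hs' <;>
        exact (indicator_of_mem (show s ∈ Ioc 0 T from ⟨hs, by linarith [ht.2]⟩) _).symm
    rw [this]
    unfold lconv
    congr 1
    ext x
    simp [mul_comm]

theorem conv_PP (f g : ℝ → ℝ) :
    convolution (PP f) (PP g) (ContinuousLinearMap.mul ℝ ℝ) volume = PP (lconv f g) := by
  unfold PP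
  rw [← posConvolution_eq_convolution_indicator f g (ContinuousLinearMap.mul ℝ ℝ) volume]
  unfold posConvolution
  congr 1
  ext t
  rw [lconv_comm]
  unfold lconv
  congr 1
  ext x
  simp [mul_comm]

theorem exists_PP {f g : ℝ → ℝ} (hf : CA f) (hg : CA g) (x : ℝ) :
    ConvolutionExistsAt (PP f) (PP g) x (ContinuousLinearMap.mul ℝ ℝ) volume := by
  unfold ConvolutionExistsAt
  rcases le_or_gt x 0 with h | h
  · refine (integrable_zero ℝ ℝ volume).congr (Eventually.of_forall fun t => ?_)
    rcases le_or_gt t 0 with h' | h'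
    · simp [PP_neg f h']
    · simp [PP_neg g (show x - t ≤ 0 by linarith)]
  · have := (intervalIntegrable_iff_integrableOn_Ioo_of_le h.le).1 (CA.exist hg hf h)
    refine ((integrable_indicator_iff measurableSet_Ioo).2 this).congr
      (Eventually.of_forall fun t => ?_)
    by_cases ht : t ∈ Ioo 0 x
    · simp [indicator_of_mem ht, PP_pos f ht.1, PP_pos g (show 0 < x - t by linarith [ht.2]),
        mul_comm]
    · rw [indicator_of_notMem ht]
      rcases le_or_gt t 0 with h' | h'
      · simp [PP_neg f h']
      · have : x - t ≤ 0 := by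
          by_contra hh
          exact ht ⟨h', by linarith⟩
        simp [PP_neg g this]

theorem norm_PP (f : ℝ → ℝ) : (fun x => ‖PP f x‖) = PP (fun x => |f x|) := by
  ext x
  rcases le_or_gt x 0 with h | h
  · simp [PP_neg _ h]
  · simp [PP_pos _ h]

theorem lconv_assoc {f g h : ℝ → ℝ} (hf : CA f) (hg : CA g) (hh : CA h) {t : ℝ} (ht : 0 < t) :
    lconv (lconv f g) h t = lconv f (lconv g h) t := by
  have := convolution_assoc (ContinuousLinearMap.mul ℝ ℝ) (ContinuousLinearMap.mul ℝ ℝ)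
    (ContinuousLinearMap.mul ℝ ℝ) (ContinuousLinearMap.mul ℝ ℝ) (f := PP f) (g := PP g)
    (k := PP h) (μ := volume) (ν := volume)
    (by intro x y z; simp [mul_assoc]) (x₀ := t) hf.aesm hg.aesm hh.aesm
    (Eventually.of_forall fun y => exists_PP hf hg y)
    (Eventually.of_forall fun y => by
      rw [norm_PP, norm_PP]; exact exists_PP hg.abs hh.abs y)
    (by
      rw [norm_PP, norm_PP, norm_PP, conv_PP]
      exact exists_PP hf.abs (hg.abs.conv hh.abs) t)
  rwa [conv_PP, conv_PP, conv_PP, conv_PP, PP_pos _ ht, PP_pos _ ht] at this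

theorem lconv_one (g : ℝ → ℝ) (t : ℝ) : lconv (fun _ => 1) g t = ∫ τ in (0:ℝ)..t, g τ := by
  simp [lconv]

theorem deriv_one_conv {g : ℝ → ℝ} (hg : CA g) {t : ℝ} (ht : 0 < t) :
    HasDerivAt (lconv (fun _ => 1) g) (g t) t := by
  have e : lconv (fun _ => 1) g = fun t => ∫ τ in (0:ℝ)..t, g τ := funext (lconv_one g)
  rw [e]
  exact intervalIntegral.integral_hasDerivAt_right (hg.int t ht)
    (hg.cont.stronglyMeasurableAtFilter isOpen_Ioi t ht) (hg.cont.continuousAt (Ioi_mem_nhds ht))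

theorem seq_J {n : ℕ} {G : ℕ → ℝ → ℝ}
    (hd : ∀ j < n, ∀ t, 0 < t → HasDerivAt (G j) (G (j+1) t) t)
    (hl : ∀ j < n, Tendsto (G j) (𝓝[>] 0) (𝓝 0)) {j : ℕ} (hj : j < n) (hA : CA (G (j+1))) {t : ℝ}
    (ht : 0 < t) : G j t = lconv (fun _ => 1) (G (j+1)) t := by
  rw [lconv_one, intervalIntegral.integral_eq_sub_of_hasDerivAt_of_tendsto ht (f := G j)
    (fun x hx => hd j hj x hx.1) (hA.int t ht) (hl j hj)
    ((hd j hj t ht).continuousAt.tendsto.mono_left nhdsWithin_le_nhds), sub_zero]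

theorem seq_CA {n : ℕ} {G : ℕ → ℝ → ℝ}
    (hd : ∀ j < n, ∀ t, 0 < t → HasDerivAt (G j) (G (j+1) t) t)
    (hl : ∀ j < n, Tendsto (G j) (𝓝[>] 0) (𝓝 0)) (hA : CA (G n)) :
    ∀ j ≤ n, CA (G j) := by
  intro j hj
  induction hj using Nat.decreasingInduction with
  | self => exact hA
  | of_succ k hk ih => exact (CA.one.conv ih).congr (fun t ht => seq_J hd hl hk ih ht)

theorem seq_iter {n : ℕ} {G : ℕ → ℝ → ℝ} {k : ℝ → ℝ} (hk : CA k)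
    (hd : ∀ j < n, ∀ t, 0 < t → HasDerivAt (G j) (G (j+1) t) t)
    (hl : ∀ j < n, Tendsto (G j) (𝓝[>] 0) (𝓝 0)) (hA : CA (G n)) :
    ∀ j ≤ n, ∀ t, 0 < t → iteratedDeriv j (lconv k (G 0)) t = lconv k (G j) t := by
  have hC := seq_CA hd hl hA
  intro j
  induction j with
  | zero => intro _ t _; simp
  | succ j ih =>
    intro hj t ht
    rw [iteratedDeriv_succ]
    have e1 : ∀ s, 0 < s → iteratedDeriv j (lconv k (G 0)) s
        = lconv (fun _ => 1) (lconv k (G (j+1))) s := by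
      intro s hs
      rw [ih (by omega) s hs, lconv_congr hs (fun _ _ _ => rfl)
        (fun u hu _ => seq_J hd hl (show j < n by omega) (hC _ hj) hu),
        ← lconv_assoc hk CA.one (hC _ hj) hs, ← lconv_assoc CA.one hk (hC _ hj) hs]
      exact lconv_congr hs (fun u _ _ => lconv_comm _ _ _) (fun _ _ _ => rfl)
    refine ((deriv_one_conv (hk.conv (hC _ hj)) ht).congr_of_eventuallyEq ?_).deriv
    filter_upwards [Ioi_mem_nhds ht] with s hs
    exact e1 s hs

theorem CA.pow (m : ℕ) : CA (fun t => t ^ m / m.factorial) := by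
  have : Continuous (fun t : ℝ => t ^ m / m.factorial) := by fun_prop
  exact ⟨this.continuousOn, fun T _ => this.intervalIntegrable _ _⟩

theorem pow_conv (m : ℕ) (t : ℝ) :
    lconv (fun t => t ^ m / m.factorial) (fun _ => 1) t = t ^ (m+1) / (m+1).factorial := by
  rw [lconv_comm, lconv_one, intervalIntegral.integral_div, integral_pow, Nat.factorial_succ]
  have : (m.factorial : ℝ) ≠ 0 := by positivity
  push_cast
  field_simp
  simp

theorem seq_taylor {n : ℕ} {G : ℕ → ℝ → ℝ}
    (hd : ∀ j < n, ∀ t, 0 < t → HasDerivAt (G j) (G (j+1) t) t)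
    (hl : ∀ j < n, Tendsto (G j) (𝓝[>] 0) (𝓝 0)) (hA : CA (G n)) :
    ∀ m < n, ∀ t, 0 < t → lconv (fun t => t ^ m / m.factorial) (G (m+1)) t = G 0 t := by
  have hC := seq_CA hd hl hA
  intro m
  induction m with
  | zero =>
    intro hm t ht
    rw [seq_J hd hl hm (hC _ hm) ht]
    simp
  | succ m ih =>
    intro hm t ht
    rw [← ih (by omega) t ht, lconv_congr (f := fun t => t ^ m / m.factorial) (g := G (m+1)) ht
      (fun _ _ _ => rfl) (fun u hu _ => seq_J hd hl hm (hC _ hm) hu),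
      ← lconv_assoc (CA.pow m) CA.one (hC _ hm) ht]
    exact lconv_congr ht (fun u _ _ => (pow_conv m u).symm) (fun _ _ _ => rfl)

theorem poly_deriv (d : ℕ → ℝ) (m : ℕ) (t : ℝ) :
    HasDerivAt (fun t : ℝ => ∑ i ∈ Finset.range (m+1), d i * t ^ i / i.factorial)
      (∑ i ∈ Finset.range m, d (i+1) * t ^ i / i.factorial) t := by
  have e : (fun t : ℝ => ∑ i ∈ Finset.range (m+1), d i * t ^ i / i.factorial)
      = fun t => (∑ i ∈ Finset.range m, d (i+1) * t ^ (i+1) / (i+1).factorial) + d 0 := by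
    ext t
    rw [Finset.sum_range_succ']
    simp
  rw [e]
  refine HasDerivAt.add_const _ (HasDerivAt.fun_sum fun i _ => ?_)
  have := ((hasDerivAt_pow (i+1) t).const_mul (d (i+1))).div_const ((i+1).factorial : ℝ)
  refine this.congr_deriv ?_
  rw [Nat.factorial_succ]
  have : (i.factorial : ℝ) ≠ 0 := by positivity
  push_cast
  field_simp

/-- Second Fundamental Theorem for the GFD of arbitrary order, Caputo case:
for a pair `(κ, k) ∈ L_n` and `f ∈ Cⁿ_{-1}(0,∞)` with `f^{(j)}(0+) = c j`,
`(I_{(κ)} ∗D_{(k)} f)(t) = f(t) - ∑_{j=0}^{n-1} f^{(j)}(0) h_{j+1}(t)` for all `t > 0`,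
where `h_{j+1}(t) = t^j/j!`. -/
theorem statement14 (n : ℕ) (hn : 1 ≤ n) (κ k : ℝ → ℝ)
    (hκ : Cm1 κ) (hk : Cm10 k)
    (hL : ∀ t : ℝ, 0 < t → lconv κ k t = t ^ (n - 1) / (n - 1).factorial)
    (f : ℝ → ℝ)
    (hf_diff : ∀ j < n, ∀ t : ℝ, 0 < t → DifferentiableAt ℝ (iteratedDeriv j f) t)
    (hfn : Cm1 (iteratedDeriv n f))
    (c : ℕ → ℝ)
    (hc : ∀ j < n, Filter.Tendsto (iteratedDeriv j f)
      (nhdsWithin 0 (Set.Ioi 0)) (nhds (c j))) :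
    ∀ t : ℝ, 0 < t →
      lconv κ (fun s =>
        iteratedDeriv n (lconv k (fun u =>
          f u - ∑ j ∈ Finset.range n, c j * u ^ j / j.factorial)) s) t
        = f t - ∑ j ∈ Finset.range n, c j * t ^ j / j.factorial := by
  intro t ht
  obtain ⟨G, hG⟩ : ∃ G : ℕ → ℝ → ℝ, G = fun j u => iteratedDeriv j f u -
    ∑ i ∈ Finset.range (n - j), c (i + j) * u ^ i / i.factorial := ⟨_, rfl⟩
  have hG0 : (fun u => f u - ∑ j ∈ Finset.range n, c j * u ^ j / j.factorial) = G 0 := by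
    rw [hG]; simp
  have hGt : f t - ∑ j ∈ Finset.range n, c j * t ^ j / j.factorial = G 0 t := by
    rw [← hG0]
  have hd : ∀ j < n, ∀ t, 0 < t → HasDerivAt (G j) (G (j+1) t) t := by
    intro j hj t ht
    obtain ⟨m, rfl⟩ : ∃ m, n = j + (m + 1) := ⟨n - j - 1, by omega⟩
    rw [hG]
    have h1 := (hf_diff j hj t ht).hasDerivAt
    rw [← iteratedDeriv_succ] at h1
    have h2 := poly_deriv (fun i => c (i + j)) m t
    have e1 : j + (m + 1) - j = m + 1 := by omega
    have e2 : j + (m + 1) - (j + 1) = m := by omega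
    simp only [e1, e2]
    refine (h1.sub h2).congr_deriv ?_
    simp only [add_assoc, add_comm 1 j]
  have hl : ∀ j < n, Tendsto (G j) (𝓝[>] 0) (𝓝 0) := by
    intro j hj
    obtain ⟨m, rfl⟩ : ∃ m, n = j + (m + 1) := ⟨n - j - 1, by omega⟩
    have e1 : j + (m + 1) - j = m + 1 := by omega
    rw [hG]
    simp only [e1]
    have h2 := (poly_deriv (fun i => c (i + j)) m 0).continuousAt.tendsto.mono_left
      (nhdsWithin_le_nhds (s := Ioi 0))
    have h3 := (hc j hj).sub h2
    rw [Finset.sum_range_succ'] at h3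
    simpa using h3
  have hA : CA (G n) := by
    refine hfn.ca.congr (fun t _ => ?_)
    rw [hG]; simp
  have hkA := hk.cm1.ca
  have hκA := hκ.ca
  rw [hGt, hG0, lconv_congr ht (fun _ _ _ => rfl)
    (fun s hs _ => seq_iter hkA hd hl hA n le_rfl s hs), ← lconv_assoc hκA hkA hA ht,
    lconv_congr ht (fun s hs _ => hL s hs) (fun _ _ _ => rfl)]
  have := seq_taylor hd hl hA (n - 1) (by omega) t ht
  rwa [show n - 1 + 1 = n by omega] at this
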